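/- Let 0 < r < ρ < R. There exists a constant C > 0, depending only on r, ρ and R, such that for every smooth subharmonic function ψ̃ on an open neighborhood of the closed disk of radius R centered at 0 in ℂ with ψ̃ ≤ 1 on the closed disk and ψ̃(0) ≥ 0, and every z ∈ ℂ with |z| < r, one has | (1/2π) ∫_{B_R(0) \ B_ρ(0)} log( |Rz − Rζ| / |R² − z·conj(ζ)| ) · Δψ̃(ζ) dA(ζ) | ≤ C. -/

import Mathlib

open MeasureTheory

/-- The Laplacian `Δf = ∂²f/∂x² + ∂²f/∂y²` of a function `f : ℂ → ℝ`, expressed via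
iterated directional (Fréchet) derivatives in the directions `1` and `i`. -/
noncomputable def laplacian (f : ℂ → ℝ) (z : ℂ) : ℝ :=
  fderiv ℝ (fun w => fderiv ℝ f w 1) z 1 +
    fderiv ℝ (fun w => fderiv ℝ f w Complex.I) z Complex.I

section Helpers
open MeasureTheory Real Set Topology

/-- Unit vector at angle `θ`. -/
noncomputable def ee (θ : ℝ) : ℂ := (Real.cos θ : ℂ) + (Real.sin θ : ℂ) * Complex.I

lemma ee_cont : Continuous ee := by unfold ee; fun_prop

lemma ee_norm (θ : ℝ) : ‖ee θ‖ = 1 := by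
  unfold ee
  rw [Complex.norm_add_mul_I]; simp

lemma ee_deriv (θ : ℝ) : HasDerivAt ee (Complex.I * ee θ) θ := by
  have h1 := (Real.hasDerivAt_cos θ).ofReal_comp
  have h2 := ((Real.hasDerivAt_sin θ).ofReal_comp).mul_const Complex.I
  have h := h1.add h2
  refine h.congr_deriv ?_
  unfold ee
  push_cast
  linear_combination (-(Complex.sin (θ:ℂ))) * Complex.I_mul_I

lemma diff_under (F F' : ℝ → ℝ → ℝ) (a b : ℝ) (hF : Continuous (Function.uncurry F))
    (hF' : Continuous (Function.uncurry F'))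
    (h : ∀ t θ, HasDerivAt (fun t => F t θ) (F' t θ) t) (t : ℝ) :
    HasDerivAt (fun t => ∫ θ in a..b, F t θ) (∫ θ in a..b, F' t θ) t := by
  have hc : IsCompact (Metric.closedBall t 1 ×ˢ uIcc a b) :=
    (isCompact_closedBall t 1).prod isCompact_uIcc
  obtain ⟨K, hK⟩ := hc.exists_bound_of_continuousOn hF'.continuousOn
  have hc1 : ∀ s, Continuous (F s) := fun s => hF.comp (by fun_prop : Continuous fun θ => (s, θ))
  have hc2 : ∀ s, Continuous (F' s) := fun s => hF'.comp (by fun_prop : Continuous fun θ => (s, θ))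
  refine (intervalIntegral.hasDerivAt_integral_of_dominated_loc_of_deriv_le
    (bound := fun _ => K) (Metric.closedBall_mem_nhds t one_pos)
    (Filter.Eventually.of_forall fun s => (hc1 s).aestronglyMeasurable)
    ((hc1 t).intervalIntegrable _ _) (hc2 t).aestronglyMeasurable ?_ ?_ ?_).2
  · refine Filter.Eventually.of_forall fun θ hθ s hs => ?_
    exact hK (s, θ) ⟨hs, uIoc_subset_uIcc hθ⟩
  · exact intervalIntegrable_const
  · exact Filter.Eventually.of_forall fun θ _ s _ => h s θ

lemma lap_eq (φ : ℂ → ℝ) (hφ : ContDiff ℝ 2 φ) (z : ℂ) :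
    laplacian φ z = fderiv ℝ (fderiv ℝ φ) z 1 1
      + fderiv ℝ (fderiv ℝ φ) z Complex.I Complex.I := by
  have hd : Differentiable ℝ (fderiv ℝ φ) :=
    (hφ.fderiv_right (m := 1) (by norm_num)).differentiable (by norm_num)
  unfold laplacian
  rw [fderiv_clm_apply (hd z) (by fun_prop), fderiv_clm_apply (hd z) (by fun_prop)]
  simp

lemma lap_rot (φ : ℂ → ℝ) (hφ : ContDiff ℝ 2 φ) (z : ℂ) (θ : ℝ) :
    laplacian φ z = fderiv ℝ (fderiv ℝ φ) z (ee θ) (ee θ)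
      + fderiv ℝ (fderiv ℝ φ) z (Complex.I * ee θ) (Complex.I * ee θ) := by
  rw [lap_eq φ hφ]
  set B := fderiv ℝ (fderiv ℝ φ) z
  have h1 : ee θ = Real.cos θ • (1:ℂ) + Real.sin θ • Complex.I := by
    simp [ee]
  have h2 : Complex.I * ee θ = (-Real.sin θ) • (1:ℂ) + Real.cos θ • Complex.I := by
    simp [ee]
    linear_combination (Complex.sin (θ:ℂ)) * Complex.I_mul_I
  rw [h2, h1]
  simp only [map_add, map_smul, add_apply, smul_apply,
    smul_eq_mul]
  have := Real.sin_sq_add_cos_sq θ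
  linear_combination (-(B 1 1) - B Complex.I Complex.I) * this

lemma lap_cont (φ : ℂ → ℝ) (hφ : ContDiff ℝ 2 φ) : Continuous (laplacian φ) := by
  have hd : Continuous (fderiv ℝ (fderiv ℝ φ)) :=
    (hφ.fderiv_right (m := 1) (by norm_num)).continuous_fderiv (by norm_num)
  have : laplacian φ = fun z => fderiv ℝ (fderiv ℝ φ) z 1 1
      + fderiv ℝ (fderiv ℝ φ) z Complex.I Complex.I := funext (lap_eq φ hφ)
  rw [this]
  fun_prop

lemma radial_bound (φ : ℂ → ℝ) (hφ : ContDiff ℝ 2 φ) (ρ R : ℝ) (hρ : 0 < ρ) (hρR : ρ < R)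
    (hlap : ∀ z ∈ Metric.closedBall (0:ℂ) R, 0 ≤ laplacian φ z)
    (hle : ∀ z ∈ Metric.closedBall (0:ℂ) R, φ z ≤ 1) (h0 : 0 ≤ φ 0) :
    ∫ t in ρ..R, (∫ θ in (-π)..π, t * ((R - t) * laplacian φ (t * ee θ))) ≤ R * (2 * π) := by
  have hD1 : ContDiff ℝ 1 (fderiv ℝ φ) := hφ.fderiv_right (m := 1) (by norm_num)
  have hc1 : Continuous (fderiv ℝ φ) := hD1.continuous
  have hc2 : Continuous (fderiv ℝ (fderiv ℝ φ)) := hD1.continuous_fderiv (by norm_num)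
  have hc0 : Continuous φ := hφ.continuous
  have hlc := lap_cont φ hφ
  have hec := ee_cont
  have hray : ∀ t θ : ℝ, HasDerivAt (fun t : ℝ => (t:ℂ) * ee θ) (ee θ) t := by
    intro t θ
    simpa using (HasDerivAt.ofReal_comp (hasDerivAt_id t)).mul_const (ee θ)
  have harc : ∀ t θ : ℝ, HasDerivAt (fun θ : ℝ => (t:ℂ) * ee θ) (t • (Complex.I * ee θ)) θ := by
    intro t θ
    simpa using (ee_deriv θ).const_mul (t:ℂ)
  have hφd : ∀ z, HasFDerivAt φ (fderiv ℝ φ z) z := fun z =>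
    (hφ.differentiable (by norm_num) z).hasFDerivAt
  have hφdd : ∀ z, HasFDerivAt (fderiv ℝ φ) (fderiv ℝ (fderiv ℝ φ) z) z := fun z =>
    (hD1.differentiable (by norm_num) z).hasFDerivAt
  set M : ℝ → ℝ := fun t => ∫ θ in (-π)..π, φ (t * ee θ) with hM
  set D : ℝ → ℝ := fun t => ∫ θ in (-π)..π, fderiv ℝ φ (t * ee θ) (ee θ) with hD
  set E : ℝ → ℝ := fun t => ∫ θ in (-π)..π,
    fderiv ℝ (fderiv ℝ φ) (t * ee θ) (ee θ) (ee θ) with hE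
  set Λ : ℝ → ℝ := fun t => ∫ θ in (-π)..π, laplacian φ (t * ee θ) with hΛ
  have hMd : ∀ t, HasDerivAt M (D t) t := by
    intro t
    refine diff_under (fun t θ => φ (t * ee θ)) (fun t θ => fderiv ℝ φ (t * ee θ) (ee θ)) _ _
      ?_ ?_ ?_ t
    · unfold Function.uncurry; fun_prop
    · unfold Function.uncurry; fun_prop
    · intro t θ
      exact (hφd _).comp_hasDerivAt t (hray t θ)
  have hDd : ∀ t, HasDerivAt D (E t) t := by
    intro t
    refine diff_under (fun t θ => fderiv ℝ φ (t * ee θ) (ee θ))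
      (fun t θ => fderiv ℝ (fderiv ℝ φ) (t * ee θ) (ee θ) (ee θ)) _ _
      ?_ ?_ ?_ t
    · unfold Function.uncurry; fun_prop
    · unfold Function.uncurry; fun_prop
    · intro t θ
      have h1 := (hφdd _).comp_hasDerivAt t (hray t θ)
      have h2 := h1.clm_apply (hasDerivAt_const t (ee θ))
      simpa using h2
  have hid : ∀ t, D t + t * E t = t * Λ t := by
    intro t
    have hP : ∫ θ in (-π)..π, (t * fderiv ℝ (fderiv ℝ φ) (t * ee θ) (Complex.I * ee θ)
        (Complex.I * ee θ) - fderiv ℝ φ (t * ee θ) (ee θ)) = 0 := by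
      rw [intervalIntegral.integral_eq_sub_of_hasDerivAt
        (f := fun θ => fderiv ℝ φ (t * ee θ) (Complex.I * ee θ))]
      · have : ee π = ee (-π) := by simp [ee]
        simp only [this, sub_self]
      · intro θ _
        have h1 := (hφdd _).comp_hasDerivAt θ (harc t θ)
        have h2 := h1.clm_apply ((ee_deriv θ).const_mul Complex.I)
        refine h2.congr_deriv ?_
        have h3 : Complex.I * (Complex.I * ee θ) = - ee θ := by
          rw [← mul_assoc, Complex.I_mul_I]; ring
        rw [h3, map_smul, map_neg, smul_apply, smul_eq_mul]
        rfl
      · apply Continuous.intervalIntegrable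
        fun_prop
    have hL : t * Λ t = t * E t + D t + ∫ θ in (-π)..π,
        (t * fderiv ℝ (fderiv ℝ φ) (t * ee θ) (Complex.I * ee θ)
        (Complex.I * ee θ) - fderiv ℝ φ (t * ee θ) (ee θ)) := by
      simp only [hΛ, hE, hD]
      rw [← intervalIntegral.integral_const_mul, ← intervalIntegral.integral_const_mul,
        ← intervalIntegral.integral_add, ← intervalIntegral.integral_add]
      · congr 1
        ext θ
        rw [lap_rot φ hφ _ θ]
        ring
      all_goals
        apply Continuous.intervalIntegrable
        fun_prop
    rw [hP] at hL
    linarith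
  have hmem : ∀ t θ, 0 ≤ t → t ≤ R → (t:ℂ) * ee θ ∈ Metric.closedBall (0:ℂ) R := by
    intro t θ h1 h2
    simp [ee_norm, abs_of_nonneg h1, h2]
  have hpi : -π ≤ π := by linarith [Real.pi_pos]
  have hΛ0 : ∀ t, 0 ≤ t → t ≤ R → 0 ≤ Λ t := by
    intro t h1 h2
    exact intervalIntegral.integral_nonneg hpi fun θ _ => hlap _ (hmem t θ h1 h2)
  have hNd : ∀ t, HasDerivAt (fun t => t * D t) (t * Λ t) t := by
    intro t
    refine ((hasDerivAt_id t).mul (hDd t)).congr_deriv ?_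
    rw [← hid]; simp
  have hN0 : ∀ t, 0 ≤ t → t ≤ R → 0 ≤ t * D t := by
    have hmono : MonotoneOn (fun t => t * D t) (Icc 0 R) := by
      refine monotoneOn_of_deriv_nonneg (convex_Icc _ _)
        (fun t _ => (hNd t).continuousAt.continuousWithinAt)
        (fun t _ => (hNd t).differentiableAt.differentiableWithinAt) ?_
      intro t ht
      rw [interior_Icc] at ht
      rw [(hNd t).deriv]
      exact mul_nonneg ht.1.le (hΛ0 t ht.1.le ht.2.le)
    intro t h1 h2
    have := hmono (left_mem_Icc.2 (h1.trans h2)) ⟨h1, h2⟩ h1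
    simpa using this
  have hD0 : ∀ t, 0 < t → t ≤ R → 0 ≤ D t := fun t h1 h2 =>
    nonneg_of_mul_nonneg_right (hN0 t h1.le h2) h1
  have hMρ : 0 ≤ M ρ := by
    have hmono : MonotoneOn M (Icc 0 R) := by
      refine monotoneOn_of_deriv_nonneg (convex_Icc _ _)
        (fun t _ => (hMd t).continuousAt.continuousWithinAt)
        (fun t _ => (hMd t).differentiableAt.differentiableWithinAt) ?_
      intro t ht
      rw [interior_Icc] at ht
      rw [(hMd t).deriv]
      exact hD0 t ht.1 ht.2.le
    have h1 := hmono (left_mem_Icc.2 (hρ.trans hρR).le) ⟨hρ.le, hρR.le⟩ hρ.le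
    have h2 : 0 ≤ M 0 := by
      simp only [hM]
      exact intervalIntegral.integral_nonneg hpi fun θ _ => by simpa using h0
    exact h2.trans h1
  have hMR : M R ≤ 2 * π := by
    have : M R ≤ ∫ θ in (-π)..π, (1:ℝ) := by
      refine intervalIntegral.integral_mono_on hpi ?_ ?_ ?_
      · apply Continuous.intervalIntegrable
        fun_prop
      · exact intervalIntegrable_const
      · intro θ _
        exact hle _ (hmem R θ (hρ.trans hρR).le le_rfl)
    simp at this
    linarith
  have hKd : ∀ t, HasDerivAt (fun t => (R - t) * (t * D t) + R * M t)
      ((R - t) * (t * Λ t) + (R - t) * D t) t := by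
    intro t
    have h1 := (((hasDerivAt_id t).const_sub R).mul (hNd t)).add ((hMd t).const_mul R)
    refine h1.congr_deriv ?_
    simp
    ring
  have hΛc : Continuous Λ := by
    refine intervalIntegral.continuous_parametric_intervalIntegral_of_continuous' ?_ _ _
    unfold Function.uncurry; fun_prop
  have hDc : Continuous D := continuous_iff_continuousAt.2 fun t => (hDd t).continuousAt
  have hint := intervalIntegral.integral_eq_sub_of_hasDerivAt (a := ρ) (b := R)
    (fun t _ => hKd t) (by apply Continuous.intervalIntegrable; fun_prop)
  have hfin : ∫ t in ρ..R, (R - t) * (t * Λ t) ≤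
      ∫ t in ρ..R, ((R - t) * (t * Λ t) + (R - t) * D t) := by
    refine intervalIntegral.integral_mono_on hρR.le ?_ ?_ ?_
    · apply Continuous.intervalIntegrable; fun_prop
    · apply Continuous.intervalIntegrable; fun_prop
    · intro t ht
      have := mul_nonneg (sub_nonneg.2 ht.2) (hD0 t (hρ.trans_le ht.1) ht.2)
      linarith
  have hconv : ∫ t in ρ..R, (∫ θ in (-π)..π, t * ((R - t) * laplacian φ (t * ee θ)))
      = ∫ t in ρ..R, (R - t) * (t * Λ t) := by
    congr 1
    ext t
    rw [intervalIntegral.integral_const_mul, intervalIntegral.integral_const_mul]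
    simp only [hΛ]
    ring
  rw [hconv]
  refine hfin.trans ?_
  rw [hint]
  have h1 := mul_nonneg (sub_nonneg.2 hρR.le) (hN0 ρ hρ.le hρR.le)
  have hR : 0 < R := hρ.trans hρR
  have h2 := mul_le_mul_of_nonneg_left hMR hR.le
  have h3 := mul_nonneg hR.le hMρ
  simp only [sub_self, zero_mul, zero_add]
  linarith

lemma kernel_bound (r ρ R : ℝ) (hr : 0 < r) (hrρ : r < ρ) (hρR : ρ < R) (z ζ : ℂ)
    (hz : ‖z‖ < r) (h1 : ρ ≤ ‖ζ‖) (h2 : ‖ζ‖ < R) :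
    |Real.log (‖(R : ℂ) * z - (R : ℂ) * ζ‖ / ‖(R : ℂ) ^ 2 - z * (starRingEnd ℂ) ζ‖)|
      ≤ 2 * R / (ρ - r) ^ 2 * (R - ‖ζ‖) := by
  have hR : 0 < R := by linarith
  set a := ‖(R : ℂ) * z - (R : ℂ) * ζ‖ with ha
  set b := ‖(R : ℂ) ^ 2 - z * (starRingEnd ℂ) ζ‖ with hb
  have hid : b ^ 2 - a ^ 2 = (R ^ 2 - ‖z‖ ^ 2) * (R ^ 2 - ‖ζ‖ ^ 2) := by
    rw [ha, hb, ← Complex.normSq_eq_norm_sq, ← Complex.normSq_eq_norm_sq,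
      ← Complex.normSq_eq_norm_sq, ← Complex.normSq_eq_norm_sq]
    simp [Complex.normSq_apply, pow_two]
    ring
  have hzζ : ρ - r ≤ ‖z - ζ‖ := by
    have := norm_sub_norm_le ζ z
    rw [norm_sub_rev] at this
    linarith
  have ha' : a = R * ‖z - ζ‖ := by
    rw [ha, ← mul_sub, norm_mul, Complex.norm_real, Real.norm_of_nonneg hR.le]
  have hapos : R * (ρ - r) ≤ a := by
    rw [ha']; exact mul_le_mul_of_nonneg_left hzζ hR.le
  have hd : 0 < R * (ρ - r) := mul_pos hR (by linarith)
  have ha0 : 0 < a := hd.trans_le hapos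
  have hb0 : 0 ≤ b := norm_nonneg _
  have hp1 : 0 ≤ R ^ 2 - ‖z‖ ^ 2 := by nlinarith [norm_nonneg z]
  have hp2 : 0 ≤ R ^ 2 - ‖ζ‖ ^ 2 := by nlinarith [norm_nonneg ζ]
  have hab : a ≤ b := by
    have := mul_nonneg hp1 hp2
    exact le_of_sq_le_sq (by linarith) hb0
  have hb1 : 0 < b := ha0.trans_le hab
  rw [abs_of_nonpos (Real.log_nonpos (by positivity) ((div_le_one hb1).2 hab)), ← Real.log_inv,
    inv_div]
  have hlog := Real.log_le_sub_one_of_pos (div_pos hb1 ha0)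
  refine hlog.trans ?_
  have hs : b / a - 1 ≤ (b ^ 2 - a ^ 2) / a ^ 2 := by
    rw [sub_div, div_self (by positivity), ← div_pow]
    have : 1 ≤ b / a := (one_le_div ha0).2 hab
    nlinarith
  refine hs.trans ?_
  have hnum : b ^ 2 - a ^ 2 ≤ R ^ 2 * (2 * R * (R - ‖ζ‖)) := by
    rw [hid]
    refine mul_le_mul (by nlinarith [sq_nonneg ‖z‖]) (by nlinarith) hp2 (by positivity)
  have hden : (R * (ρ - r)) ^ 2 ≤ a ^ 2 := by gcongr
  calc (b ^ 2 - a ^ 2) / a ^ 2 ≤ (R ^ 2 * (2 * R * (R - ‖ζ‖))) / (R * (ρ - r)) ^ 2 := by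
        refine div_le_div₀ ?_ hnum (by positivity) hden
        have : 0 ≤ R - ‖ζ‖ := by linarith
        positivity
    _ = _ := by
        have : ρ - r ≠ 0 := by linarith
        field_simp

lemma extend (ψ : ℂ → ℝ) (U : Set ℂ) (R : ℝ) (hR : 0 < R) (hU : IsOpen U)
    (hsub : Metric.closedBall (0 : ℂ) R ⊆ U) (hψ : ContDiffOn ℝ (⊤ : ℕ∞) ψ U) :
    ∃ φ : ℂ → ℝ, ContDiff ℝ 2 φ ∧ ∀ z ∈ Metric.closedBall (0 : ℂ) R, φ =ᶠ[𝓝 z] ψ := by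
  obtain ⟨δ, hδ, hδU⟩ := (isCompact_closedBall (0:ℂ) R).exists_cthickening_subset_open hU hsub
  rw [cthickening_closedBall hδ.le hR.le] at hδU
  let f : ContDiffBump (0:ℂ) := ⟨R + δ / 2, R + δ, by positivity, by linarith⟩
  refine ⟨fun z => f z * ψ z, ?_, ?_⟩
  · rw [contDiff_iff_contDiffAt]
    intro z
    by_cases hz : z ∈ U
    · have h1 : ContDiffAt ℝ 2 ψ z :=
        ((hψ.contDiffAt (hU.mem_nhds hz)).of_le (WithTop.coe_le_coe.2 (le_top : (2 : ℕ∞) ≤ ⊤)))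
      exact f.contDiffAt.mul h1
    · have hz' : z ∉ tsupport f := by
        rw [f.tsupport_eq]
        intro h
        apply hz
        apply hδU
        rw [add_comm]; exact h
      have h0 : (fun z => f z * ψ z) =ᶠ[𝓝 z] fun _ => 0 := by
        have := notMem_tsupport_iff_eventuallyEq.1 hz'
        filter_upwards [this] with w hw
        simp [hw]
      exact contDiffAt_const.congr_of_eventuallyEq h0
  · intro z hz
    have hz' : z ∈ Metric.ball (0:ℂ) f.rIn := by
      simp only [Metric.mem_ball, Metric.mem_closedBall] at *
      change _ < R + δ / 2
      linarith
    filter_upwards [f.eventuallyEq_one_of_mem_ball hz'] with w hw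
    simp [hw]

lemma lap_congr (φ ψ : ℂ → ℝ) (z : ℂ) (h : φ =ᶠ[𝓝 z] ψ) : laplacian φ z = laplacian ψ z := by
  have h1 : ∀ v : ℂ, (fun w => fderiv ℝ φ w v) =ᶠ[𝓝 z] fun w => fderiv ℝ ψ w v := by
    intro v
    filter_upwards [h.fderiv (𝕜 := ℝ)] with w hw
    rw [hw]
  unfold laplacian
  rw [(h1 1).fderiv_eq, (h1 Complex.I).fderiv_eq]

lemma polar_annulus (g : ℂ → ℝ) (hg : Continuous g) (ρ R : ℝ) (hρ : 0 < ρ) (hρR : ρ < R) :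
    ∫ ζ in Metric.ball (0 : ℂ) R \ Metric.ball (0 : ℂ) ρ, g ζ
      = ∫ t in ρ..R, ∫ θ in (-π)..π, t * g (t * ee θ) := by
  have hms : MeasurableSet (Metric.ball (0 : ℂ) R \ Metric.ball (0 : ℂ) ρ) :=
    measurableSet_ball.diff measurableSet_ball
  have hec := ee_cont
  rw [← integral_indicator hms, ← Complex.integral_comp_polarCoord_symm, polarCoord_target]
  have hpi : -π ≤ π := by linarith [Real.pi_pos]
  have hcong : ∫ p in Ioi (0:ℝ) ×ˢ Ioo (-π) π, p.1 •
      (Metric.ball (0 : ℂ) R \ Metric.ball (0 : ℂ) ρ).indicator g (Complex.polarCoord.symm p)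
      = ∫ p in Ioi (0:ℝ) ×ˢ Ioo (-π) π, (Ico ρ R ×ˢ univ).indicator
        (fun p : ℝ × ℝ => p.1 * g (p.1 * ee p.2)) p := by
    refine setIntegral_congr_fun (measurableSet_Ioi.prod measurableSet_Ioo) ?_
    rintro ⟨t, θ⟩ ⟨ht, -⟩
    have ht : 0 < t := ht
    have hee : Complex.polarCoord.symm (t, θ) = t * ee θ := by
      rw [Complex.polarCoord_symm_apply]; rfl
    simp only [hee]
    by_cases hc : ρ ≤ t ∧ t < R
    · rw [indicator_of_mem, indicator_of_mem]
      · rfl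
      · exact ⟨hc, mem_univ _⟩
      · simp [ee_norm, abs_of_pos ht, hc]
    · rw [indicator_of_notMem, indicator_of_notMem]
      · simp
      · exact fun h => hc h.1
      · intro h
        apply hc
        simp [ee_norm, abs_of_pos ht] at h
        exact ⟨h.2, h.1⟩
  rw [hcong, setIntegral_indicator (measurableSet_Ico.prod MeasurableSet.univ), prod_inter_prod,
    inter_univ]
  have hI : Ioi (0:ℝ) ∩ Ico ρ R = Ico ρ R := by
    apply inter_eq_right.2
    intro t ht
    exact hρ.trans_le ht.1
  rw [hI, Measure.volume_eq_prod, setIntegral_prod]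
  · rw [intervalIntegral.integral_of_le hρR.le, ← integral_Icc_eq_integral_Ioc,
      integral_Icc_eq_integral_Ico]
    refine setIntegral_congr_fun measurableSet_Ico fun t _ => ?_
    simp only
    rw [intervalIntegral.integral_of_le hpi, integral_Ioc_eq_integral_Ioo]
  · have hco : Continuous (fun p : ℝ × ℝ => p.1 * g (p.1 * ee p.2)) := by fun_prop
    have := hco.continuousOn.integrableOn_compact (μ := volume)
      ((isCompact_Icc (a := ρ) (b := R)).prod (isCompact_Icc (a := -π) (b := π)))
    exact this.mono_set (prod_mono Ico_subset_Icc_self Ioo_subset_Icc_self)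

end Helpers

/-- Let `0 < r < ρ < R`. There is a constant `C > 0`, depending only on `r, ρ, R`, such that
for every smooth subharmonic `ψ̃` on an open neighborhood of the closed disk of radius `R`, with
`ψ̃ ≤ 1` on the closed disk and `ψ̃(0) ≥ 0`, and every `z` with `|z| < r`,
`|(1/2π) ∫_{B_R(0) \ B_ρ(0)} log(|Rz − Rζ|/|R² − z ζ̄|) Δψ̃(ζ) dA(ζ)| ≤ C`. -/
theorem stmt_7 (r ρ R : ℝ) (hr : 0 < r) (hrρ : r < ρ) (hρR : ρ < R) :
    ∃ C : ℝ, 0 < C ∧ ∀ ψ : ℂ → ℝ, ∀ U : Set ℂ, IsOpen U →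
      Metric.closedBall (0 : ℂ) R ⊆ U → ContDiffOn ℝ (⊤ : ℕ∞) ψ U →
      (∀ z ∈ U, 0 ≤ laplacian ψ z) →
      (∀ z ∈ Metric.closedBall (0 : ℂ) R, ψ z ≤ 1) → 0 ≤ ψ 0 →
      ∀ z : ℂ, ‖z‖ < r →
        |(1 / (2 * Real.pi)) *
            ∫ ζ in Metric.ball (0 : ℂ) R \ Metric.ball (0 : ℂ) ρ,
              Real.log (‖(R : ℂ) * z - (R : ℂ) * ζ‖ /
                  ‖(R : ℂ) ^ 2 - z * (starRingEnd ℂ) ζ‖) * laplacian ψ ζ|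
          ≤ C := by
  have hρ : 0 < ρ := hr.trans hrρ
  have hR : 0 < R := hρ.trans hρR
  have hρr : 0 < ρ - r := sub_pos.2 hrρ
  refine ⟨1 / (2 * Real.pi) * (2 * R / (ρ - r) ^ 2 * (R * (2 * Real.pi))), by positivity, ?_⟩
  intro ψ U hU hsub hψ hlap hle h0 z hz
  obtain ⟨φ, hφ, hφψ⟩ := extend ψ U R hR hU hsub hψ
  have hL : ∀ w ∈ Metric.closedBall (0:ℂ) R, laplacian φ w = laplacian ψ w := fun w hw =>
    lap_congr φ ψ w (hφψ w hw)
  have hrad := radial_bound φ hφ ρ R hρ hρR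
    (fun w hw => by rw [hL w hw]; exact hlap w (hsub hw))
    (fun w hw => by rw [(hφψ w hw).eq_of_nhds]; exact hle w hw)
    (by rw [(hφψ 0 (by simp [hR.le])).eq_of_nhds]; exact h0)
  have hlc := lap_cont φ hφ
  have hgc : Continuous (fun ζ : ℂ => (R - ‖ζ‖) * laplacian φ ζ) := by fun_prop
  have hms : MeasurableSet (Metric.ball (0 : ℂ) R \ Metric.ball (0 : ℂ) ρ) :=
    measurableSet_ball.diff measurableSet_ball
  have hpol := polar_annulus _ hgc ρ R hρ hρR
  have hA : ∫ ζ in Metric.ball (0 : ℂ) R \ Metric.ball (0 : ℂ) ρ, (R - ‖ζ‖) * laplacian φ ζ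
      ≤ R * (2 * Real.pi) := by
    rw [hpol]
    refine le_trans (le_of_eq ?_) hrad
    refine intervalIntegral.integral_congr fun t ht => ?_
    rw [Set.uIcc_of_le hρR.le] at ht
    have ht0 : 0 < t := hρ.trans_le ht.1
    simp [ee_norm, abs_of_pos ht0]
  rw [abs_mul, abs_of_pos (by positivity : 0 < 1 / (2 * Real.pi))]
  refine mul_le_mul_of_nonneg_left ?_ (by positivity)
  refine le_trans ?_ (mul_le_mul_of_nonneg_left hA (by positivity))
  rw [← integral_const_mul, ← Real.norm_eq_abs]
  refine norm_integral_le_of_norm_le ?_ ?_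
  · have : Continuous (fun ζ : ℂ => 2 * R / (ρ - r) ^ 2 * ((R - ‖ζ‖) * laplacian φ ζ)) := by
      fun_prop
    exact (this.continuousOn.integrableOn_compact (isCompact_closedBall (0:ℂ) R)).mono_set
      (Set.sdiff_subset.trans Metric.ball_subset_closedBall)
  · refine (ae_restrict_iff' hms).2 (Filter.Eventually.of_forall fun ζ hζ => ?_)
    have h2 : ‖ζ‖ < R := by simpa using hζ.1
    have h1 : ρ ≤ ‖ζ‖ := by simpa using hζ.2
    have hm : ζ ∈ Metric.closedBall (0:ℂ) R := by simpa using h2.le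
    rw [Real.norm_eq_abs, abs_mul, hL ζ hm, abs_of_nonneg (hlap ζ (hsub hm)), ← mul_assoc]
    exact mul_le_mul_of_nonneg_right (kernel_bound r ρ R hr hrρ hρR z ζ hz h1 h2)
      (hlap ζ (hsub hm))
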